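/- Let Φ be a derivation in LKp whose last inference is a cut on a formula P, whose left premise Γ ⊢ P, Δ is the conclusion of a right logical rule instance introducing P with premises P₁,…,Pₙ, and whose right premise Γ', P ⊢ Δ' is the conclusion of a left logical rule instance introducing P with premises P_{n+1},…,P_{n+m}. Then there exists a derivation Ψ in LKp of the conclusion Γ, Γ' ⊢ Δ, Δ' whose leaf premises form a subset of {P₁,…,P_{n+m}} and such that δ(Ψ) < δ(Φ). -/

import Mathlib

/-!
The system LKp: the propositional fragment of Gentzen's sequent calculus LK.
Sequents are pairs of finite lists of formulas.  In the rules below, a list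
written `Γ, P` in the paper is encoded as `Γ ++ [P]` on the left of the
turnstile and as `P :: Δ` on the right (matching the usual presentation
`Γ ⊢ P, Δ`).
-/

namespace LKp

/-- Classical propositional formulas over countably many atoms. -/
inductive Formula : Type where
  | atom : ℕ → Formula
  | neg  : Formula → Formula
  | and  : Formula → Formula → Formula
  | or   : Formula → Formula → Formula
  | imp  : Formula → Formula → Formula
deriving DecidableEq

/-- A sequent `Γ ⊢ Δ` is a pair of finite lists of formulas. -/
abbrev Sequent := List Formula × List Formula

/-- The degree of a formula: `δ(a) = 1`, `δ(¬P) = 1 + δ(P)`,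
`δ(P∧Q) = δ(P∨Q) = δ(P→Q) = 1 + max(δ(P), δ(Q))`. -/
def Formula.degree : Formula → ℕ
  | .atom _ => 1
  | .neg P => P.degree + 1
  | .and P Q => max P.degree Q.degree + 1
  | .or P Q => max P.degree Q.degree + 1
  | .imp P Q => max P.degree Q.degree + 1

/-- Derivations in LKp: trees of rule instances, with `hyp` marking an open
leaf (a premise of the derivation). -/
inductive Deriv : Sequent → Type where
  | hyp (S : Sequent) : Deriv S
  | ax (P : Formula) : Deriv ([P], [P])
  | permL (Γ Γ' Δ : List Formula) (P Q : Formula) :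
      Deriv (Γ ++ P :: Q :: Γ', Δ) → Deriv (Γ ++ Q :: P :: Γ', Δ)
  | permR (Γ Δ Δ' : List Formula) (P Q : Formula) :
      Deriv (Γ, Δ ++ P :: Q :: Δ') → Deriv (Γ, Δ ++ Q :: P :: Δ')
  | contL (Γ Δ : List Formula) (P : Formula) :
      Deriv (Γ ++ [P, P], Δ) → Deriv (Γ ++ [P], Δ)
  | contR (Γ Δ : List Formula) (Q : Formula) :
      Deriv (Γ, Q :: Q :: Δ) → Deriv (Γ, Q :: Δ)
  | weakL (Γ Δ : List Formula) (P : Formula) :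
      Deriv (Γ, Δ) → Deriv (Γ ++ [P], Δ)
  | weakR (Γ Δ : List Formula) (Q : Formula) :
      Deriv (Γ, Δ) → Deriv (Γ, Q :: Δ)
  | cut (Γ Δ Γ' Δ' : List Formula) (P : Formula) :
      Deriv (Γ, P :: Δ) → Deriv (Γ' ++ [P], Δ') → Deriv (Γ ++ Γ', Δ ++ Δ')
  | andL1 (Γ Δ : List Formula) (P Q : Formula) :
      Deriv (Γ ++ [P], Δ) → Deriv (Γ ++ [P.and Q], Δ)
  | andL2 (Γ Δ : List Formula) (P Q : Formula) :
      Deriv (Γ ++ [Q], Δ) → Deriv (Γ ++ [P.and Q], Δ)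
  | andR (Γ Δ : List Formula) (P Q : Formula) :
      Deriv (Γ, P :: Δ) → Deriv (Γ, Q :: Δ) → Deriv (Γ, (P.and Q) :: Δ)
  | orR1 (Γ Δ : List Formula) (P Q : Formula) :
      Deriv (Γ, P :: Δ) → Deriv (Γ, (P.or Q) :: Δ)
  | orR2 (Γ Δ : List Formula) (P Q : Formula) :
      Deriv (Γ, Q :: Δ) → Deriv (Γ, (P.or Q) :: Δ)
  | orL (Γ Δ : List Formula) (P Q : Formula) :
      Deriv (Γ ++ [P], Δ) → Deriv (Γ ++ [Q], Δ) → Deriv (Γ ++ [P.or Q], Δ)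
  | impR (Γ Δ : List Formula) (P Q : Formula) :
      Deriv (Γ ++ [P], Q :: Δ) → Deriv (Γ, (P.imp Q) :: Δ)
  | impL (Γ Δ : List Formula) (P Q : Formula) :
      Deriv (Γ, P :: Δ) → Deriv (Γ ++ [Q], Δ) → Deriv (Γ ++ [P.imp Q], Δ)
  | negL (Γ Δ : List Formula) (P : Formula) :
      Deriv (Γ, P :: Δ) → Deriv (Γ ++ [P.neg], Δ)
  | negR (Γ Δ : List Formula) (P : Formula) :
      Deriv (Γ ++ [P], Δ) → Deriv (Γ, P.neg :: Δ)

/-- The degree of a derivation: the maximum of the degrees of the cut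
formulas occurring in it (`0` if there is no cut). -/
def Deriv.degree : ∀ {S : Sequent}, Deriv S → ℕ
  | _, .hyp _ => 0
  | _, .ax _ => 0
  | _, .permL _ _ _ _ _ d => Deriv.degree d
  | _, .permR _ _ _ _ _ d => Deriv.degree d
  | _, .contL _ _ _ d => Deriv.degree d
  | _, .contR _ _ _ d => Deriv.degree d
  | _, .weakL _ _ _ d => Deriv.degree d
  | _, .weakR _ _ _ d => Deriv.degree d
  | _, .cut _ _ _ _ P d₁ d₂ => max P.degree (max (Deriv.degree d₁) (Deriv.degree d₂))
  | _, .andL1 _ _ _ _ d => Deriv.degree d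
  | _, .andL2 _ _ _ _ d => Deriv.degree d
  | _, .andR _ _ _ _ d₁ d₂ => max (Deriv.degree d₁) (Deriv.degree d₂)
  | _, .orR1 _ _ _ _ d => Deriv.degree d
  | _, .orR2 _ _ _ _ d => Deriv.degree d
  | _, .orL _ _ _ _ d₁ d₂ => max (Deriv.degree d₁) (Deriv.degree d₂)
  | _, .impR _ _ _ _ d => Deriv.degree d
  | _, .impL _ _ _ _ d₁ d₂ => max (Deriv.degree d₁) (Deriv.degree d₂)
  | _, .negL _ _ _ d => Deriv.degree d
  | _, .negR _ _ _ d => Deriv.degree d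

/-- A derivation is a proof when all of its leaves are axiom instances,
i.e. it has no open hypothesis. -/
def Deriv.isProof : ∀ {S : Sequent}, Deriv S → Prop
  | _, .hyp _ => False
  | _, .ax _ => True
  | _, .permL _ _ _ _ _ d => Deriv.isProof d
  | _, .permR _ _ _ _ _ d => Deriv.isProof d
  | _, .contL _ _ _ d => Deriv.isProof d
  | _, .contR _ _ _ d => Deriv.isProof d
  | _, .weakL _ _ _ d => Deriv.isProof d
  | _, .weakR _ _ _ d => Deriv.isProof d
  | _, .cut _ _ _ _ _ d₁ d₂ => Deriv.isProof d₁ ∧ Deriv.isProof d₂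
  | _, .andL1 _ _ _ _ d => Deriv.isProof d
  | _, .andL2 _ _ _ _ d => Deriv.isProof d
  | _, .andR _ _ _ _ d₁ d₂ => Deriv.isProof d₁ ∧ Deriv.isProof d₂
  | _, .orR1 _ _ _ _ d => Deriv.isProof d
  | _, .orR2 _ _ _ _ d => Deriv.isProof d
  | _, .orL _ _ _ _ d₁ d₂ => Deriv.isProof d₁ ∧ Deriv.isProof d₂
  | _, .impR _ _ _ _ d => Deriv.isProof d
  | _, .impL _ _ _ _ d₁ d₂ => Deriv.isProof d₁ ∧ Deriv.isProof d₂
  | _, .negL _ _ _ d => Deriv.isProof d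
  | _, .negR _ _ _ d => Deriv.isProof d

/-- The list of open premises (hypothesis leaves) of a derivation. -/
def Deriv.prems : ∀ {S : Sequent}, Deriv S → List Sequent
  | _, .hyp S => [S]
  | _, .ax _ => []
  | _, .permL _ _ _ _ _ d => Deriv.prems d
  | _, .permR _ _ _ _ _ d => Deriv.prems d
  | _, .contL _ _ _ d => Deriv.prems d
  | _, .contR _ _ _ d => Deriv.prems d
  | _, .weakL _ _ _ d => Deriv.prems d
  | _, .weakR _ _ _ d => Deriv.prems d
  | _, .cut _ _ _ _ _ d₁ d₂ => Deriv.prems d₁ ++ Deriv.prems d₂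
  | _, .andL1 _ _ _ _ d => Deriv.prems d
  | _, .andL2 _ _ _ _ d => Deriv.prems d
  | _, .andR _ _ _ _ d₁ d₂ => Deriv.prems d₁ ++ Deriv.prems d₂
  | _, .orR1 _ _ _ _ d => Deriv.prems d
  | _, .orR2 _ _ _ _ d => Deriv.prems d
  | _, .orL _ _ _ _ d₁ d₂ => Deriv.prems d₁ ++ Deriv.prems d₂
  | _, .impR _ _ _ _ d => Deriv.prems d
  | _, .impL _ _ _ _ d₁ d₂ => Deriv.prems d₁ ++ Deriv.prems d₂
  | _, .negL _ _ _ d => Deriv.prems d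
  | _, .negR _ _ _ d => Deriv.prems d

/-- A derivation is cut-free when it contains no instance of the cut rule. -/
def Deriv.cutFree : ∀ {S : Sequent}, Deriv S → Prop
  | _, .hyp _ => True
  | _, .ax _ => True
  | _, .permL _ _ _ _ _ d => Deriv.cutFree d
  | _, .permR _ _ _ _ _ d => Deriv.cutFree d
  | _, .contL _ _ _ d => Deriv.cutFree d
  | _, .contR _ _ _ d => Deriv.cutFree d
  | _, .weakL _ _ _ d => Deriv.cutFree d
  | _, .weakR _ _ _ d => Deriv.cutFree d
  | _, .cut _ _ _ _ _ _ _ => False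
  | _, .andL1 _ _ _ _ d => Deriv.cutFree d
  | _, .andL2 _ _ _ _ d => Deriv.cutFree d
  | _, .andR _ _ _ _ d₁ d₂ => Deriv.cutFree d₁ ∧ Deriv.cutFree d₂
  | _, .orR1 _ _ _ _ d => Deriv.cutFree d
  | _, .orR2 _ _ _ _ d => Deriv.cutFree d
  | _, .orL _ _ _ _ d₁ d₂ => Deriv.cutFree d₁ ∧ Deriv.cutFree d₂
  | _, .impR _ _ _ _ d => Deriv.cutFree d
  | _, .impL _ _ _ _ d₁ d₂ => Deriv.cutFree d₁ ∧ Deriv.cutFree d₂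
  | _, .negL _ _ _ d => Deriv.cutFree d
  | _, .negR _ _ _ d => Deriv.cutFree d

end LKp

namespace LKp

/-- A right logical rule instance introducing the formula `P` (on the right of
the turnstile), recorded together with the list of its premise sequents and
its conclusion sequent. -/
inductive RightIntro : Formula → List Sequent → Sequent → Type where
  | andR (Γ Δ : List Formula) (Q R : Formula) :
      RightIntro (Q.and R) [(Γ, Q :: Δ), (Γ, R :: Δ)] (Γ, (Q.and R) :: Δ)
  | orR1 (Γ Δ : List Formula) (Q R : Formula) :
      RightIntro (Q.or R) [(Γ, Q :: Δ)] (Γ, (Q.or R) :: Δ)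
  | orR2 (Γ Δ : List Formula) (Q R : Formula) :
      RightIntro (Q.or R) [(Γ, R :: Δ)] (Γ, (Q.or R) :: Δ)
  | impR (Γ Δ : List Formula) (Q R : Formula) :
      RightIntro (Q.imp R) [(Γ ++ [Q], R :: Δ)] (Γ, (Q.imp R) :: Δ)
  | negR (Γ Δ : List Formula) (Q : Formula) :
      RightIntro Q.neg [(Γ ++ [Q], Δ)] (Γ, Q.neg :: Δ)

/-- A left logical rule instance introducing the formula `P` (on the left of
the turnstile), with its premise sequents and conclusion sequent. -/
inductive LeftIntro : Formula → List Sequent → Sequent → Type where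
  | andL1 (Γ Δ : List Formula) (Q R : Formula) :
      LeftIntro (Q.and R) [(Γ ++ [Q], Δ)] (Γ ++ [Q.and R], Δ)
  | andL2 (Γ Δ : List Formula) (Q R : Formula) :
      LeftIntro (Q.and R) [(Γ ++ [R], Δ)] (Γ ++ [Q.and R], Δ)
  | orL (Γ Δ : List Formula) (Q R : Formula) :
      LeftIntro (Q.or R) [(Γ ++ [Q], Δ), (Γ ++ [R], Δ)] (Γ ++ [Q.or R], Δ)
  | impL (Γ Δ : List Formula) (Q R : Formula) :
      LeftIntro (Q.imp R) [(Γ, Q :: Δ), (Γ ++ [R], Δ)] (Γ ++ [Q.imp R], Δ)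
  | negL (Γ Δ : List Formula) (Q : Formula) :
      LeftIntro Q.neg [(Γ, Q :: Δ)] (Γ ++ [Q.neg], Δ)

/-- The one-step derivation determined by a right logical rule instance:
its premises are open hypothesis leaves. -/
def RightIntro.deriv : ∀ {P ps S}, RightIntro P ps S → Deriv S
  | _, _, _, .andR Γ Δ Q R => .andR Γ Δ Q R (.hyp _) (.hyp _)
  | _, _, _, .orR1 Γ Δ Q R => .orR1 Γ Δ Q R (.hyp _)
  | _, _, _, .orR2 Γ Δ Q R => .orR2 Γ Δ Q R (.hyp _)
  | _, _, _, .impR Γ Δ Q R => .impR Γ Δ Q R (.hyp _)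
  | _, _, _, .negR Γ Δ Q => .negR Γ Δ Q (.hyp _)

/-- The one-step derivation determined by a left logical rule instance:
its premises are open hypothesis leaves. -/
def LeftIntro.deriv : ∀ {P ps S}, LeftIntro P ps S → Deriv S
  | _, _, _, .andL1 Γ Δ Q R => .andL1 Γ Δ Q R (.hyp _)
  | _, _, _, .andL2 Γ Δ Q R => .andL2 Γ Δ Q R (.hyp _)
  | _, _, _, .orL Γ Δ Q R => .orL Γ Δ Q R (.hyp _) (.hyp _)
  | _, _, _, .impL Γ Δ Q R => .impL Γ Δ Q R (.hyp _) (.hyp _)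
  | _, _, _, .negL Γ Δ Q => .negL Γ Δ Q (.hyp _)

/-!
A cut on a compound formula is replaced by cuts on its immediate subformulas, which have smaller
degree. For `∧` and `∨` one cut between a premise of each rule suffices, and for `¬` as well, except
that the two sides exchange their roles. For `P → Q`, with premises `Γ, P ⊢ Q, Δ` and `Γ' ⊢ P, Δ'`
and `Γ', Q ⊢ Δ'`, a cut on `Q` gives `Γ, P, Γ' ⊢ Δ, Δ'`, and a further cut on `P` gives
`Γ', Γ, Γ' ⊢ Δ', Δ, Δ'`. The order and multiplicity of formulas are then repaired by structural
rules, which change neither the open premises nor the degree.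
-/

/-- A property of lists closed under exchange of neighbours, weakening and contraction: the
structural rules on one side of the turnstile, abstracted so that both sides share one argument. -/
structure StructurallyClosed {α : Type*} (p : List α → Prop) : Prop where
  exchange (l₁ l₂ : List α) (a b : α) : p (l₁ ++ a :: b :: l₂) → p (l₁ ++ b :: a :: l₂)
  weaken (l : List α) (a : α) : p l → p (a :: l)
  contract (l : List α) (a : α) : p (a :: a :: l) → p (a :: l)

namespace StructurallyClosed

variable {α : Type*} {p : List α → Prop} {l l' : List α} {a : α}

lemma append_left_perm (hp : StructurallyClosed p) (h : l.Perm l') (c : List α)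
    (hl : p (c ++ l)) : p (c ++ l') := by
  induction h generalizing c with
  | nil => exact hl
  | cons a _ ih => simpa using ih (c ++ [a]) (by simpa using hl)
  | swap a b l => exact hp.exchange c l b a hl
  | trans _ _ ih₁ ih₂ => exact ih₂ c (ih₁ c hl)

lemma perm (hp : StructurallyClosed p) (h : l.Perm l') (hl : p l) : p l' :=
  hp.append_left_perm h [] hl

lemma weaken_append (hp : StructurallyClosed p) (l' : List α) (hl : p l) : p (l' ++ l) := by
  induction l' with
  | nil => exact hl
  | cons a l' ih => exact hp.weaken (l' ++ l) a ih

lemma contract_mem (hp : StructurallyClosed p) (ha : a ∈ l) (hl : p (a :: l)) : p l := by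
  obtain ⟨s, t, rfl⟩ := List.append_of_mem ha
  have hfront : p (a :: a :: (s ++ t)) := hp.perm (List.perm_middle.cons a) hl
  exact hp.perm List.perm_middle.symm (hp.contract (s ++ t) a hfront)

lemma contract_append (hp : StructurallyClosed p) (h : l ⊆ l') (hl : p (l ++ l')) : p l' := by
  induction l with
  | nil => exact hl
  | cons a l ih =>
    obtain ⟨ha, hsub⟩ := List.cons_subset.mp h
    exact ih hsub (hp.contract_mem (List.mem_append_right l ha) hl)

theorem of_subset (hp : StructurallyClosed p) (h : l ⊆ l') (hl : p l) : p l' :=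
  hp.contract_append h (hp.perm List.perm_append_comm (hp.weaken_append l' hl))

end StructurallyClosed

/-- The sequent `S` has a derivation whose open premises are among `H` and whose cuts all have
degree at most `n`. -/
def Derivable (H : List Sequent) (n : ℕ) (S : Sequent) : Prop :=
  ∃ Ψ : Deriv S, Ψ.prems ⊆ H ∧ Ψ.degree ≤ n

namespace Derivable

variable {H : List Sequent} {n : ℕ} {S : Sequent} {Γ Γ' Δ Δ' : List Formula} {P Q : Formula}

lemma hyp (hS : S ∈ H) : Derivable H n S :=
  ⟨.hyp S, List.cons_subset.mpr ⟨hS, List.nil_subset H⟩, Nat.zero_le n⟩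

lemma cut (hP : P.degree ≤ n) (h₁ : Derivable H n (Γ, P :: Δ))
    (h₂ : Derivable H n (Γ' ++ [P], Δ')) : Derivable H n (Γ ++ Γ', Δ ++ Δ') := by
  obtain ⟨Ψ₁, hprems₁, hdeg₁⟩ := h₁
  obtain ⟨Ψ₂, hprems₂, hdeg₂⟩ := h₂
  exact ⟨.cut Γ Δ Γ' Δ' P Ψ₁ Ψ₂, List.append_subset.mpr ⟨hprems₁, hprems₂⟩,
    max_le hP (max_le hdeg₁ hdeg₂)⟩

-- Antecedents are read backwards because the rules act on their last formula.
lemma structurallyClosed_left (H : List Sequent) (n : ℕ) (Δ : List Formula) :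
    StructurallyClosed fun Γ ↦ Derivable H n (Γ.reverse, Δ) where
  exchange Γ₁ Γ₂ P Q := by
    simp only [List.reverse_append, List.reverse_cons, List.append_assoc, List.singleton_append]
    exact fun ⟨Ψ, hprems, hdeg⟩ ↦ ⟨.permL Γ₂.reverse Γ₁.reverse Δ Q P Ψ, hprems, hdeg⟩
  weaken Γ P := by
    simp only [List.reverse_cons]
    exact fun ⟨Ψ, hprems, hdeg⟩ ↦ ⟨.weakL Γ.reverse Δ P Ψ, hprems, hdeg⟩
  contract Γ P := by
    simp only [List.reverse_cons, List.append_assoc, List.singleton_append]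
    exact fun ⟨Ψ, hprems, hdeg⟩ ↦ ⟨.contL Γ.reverse Δ P Ψ, hprems, hdeg⟩

lemma structurallyClosed_right (H : List Sequent) (n : ℕ) (Γ : List Formula) :
    StructurallyClosed fun Δ ↦ Derivable H n (Γ, Δ) where
  exchange Δ₁ Δ₂ P Q := fun ⟨Ψ, hprems, hdeg⟩ ↦ ⟨.permR Γ Δ₁ Δ₂ P Q Ψ, hprems, hdeg⟩
  weaken Δ P := fun ⟨Ψ, hprems, hdeg⟩ ↦ ⟨.weakR Γ Δ P Ψ, hprems, hdeg⟩
  contract Δ P := fun ⟨Ψ, hprems, hdeg⟩ ↦ ⟨.contR Γ Δ P Ψ, hprems, hdeg⟩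

lemma mono_left (hΓ : Γ ⊆ Γ') (h : Derivable H n (Γ, Δ)) : Derivable H n (Γ', Δ) := by
  have hrev : Γ.reverse ⊆ Γ'.reverse := by simpa using hΓ
  simpa using (structurallyClosed_left H n Δ).of_subset hrev (by simpa using h)

lemma mono_right (hΔ : Δ ⊆ Δ') (h : Derivable H n (Γ, Δ)) : Derivable H n (Γ, Δ') :=
  (structurallyClosed_right H n Γ).of_subset hΔ h

theorem mono (hΓ : Γ ⊆ Γ') (hΔ : Δ ⊆ Δ') (h : Derivable H n (Γ, Δ)) : Derivable H n (Γ', Δ') :=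
  (h.mono_left hΓ).mono_right hΔ

lemma cut_swap (hP : P.degree ≤ n) (h₁ : Derivable H n (Γ ++ [P], Δ))
    (h₂ : Derivable H n (Γ', P :: Δ')) : Derivable H n (Γ ++ Γ', Δ ++ Δ') :=
  (cut hP h₂ h₁).mono List.perm_append_comm.subset List.perm_append_comm.subset

lemma cut_imp (hP : P.degree ≤ n) (hQ : Q.degree ≤ n)
    (h : Derivable H n (Γ ++ [P], Q :: Δ)) (h₁ : Derivable H n (Γ', P :: Δ'))
    (h₂ : Derivable H n (Γ' ++ [Q], Δ')) : Derivable H n (Γ ++ Γ', Δ ++ Δ') := by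
  have hcutQ : Derivable H n (Γ ++ [P] ++ Γ', Δ ++ Δ') := cut hQ h h₂
  have hPlast : Derivable H n (Γ ++ Γ' ++ [P], Δ ++ Δ') := hcutQ.mono_left (by simp)
  have hcutP : Derivable H n (Γ' ++ (Γ ++ Γ'), Δ' ++ (Δ ++ Δ')) := cut hP h₁ hPlast
  exact hcutP.mono (by simp) (by simp)

end Derivable

theorem exists_derivable_of_rightIntro_of_leftIntro {P : Formula} {Γ Δ Γ' Δ' : List Formula}
    {ps₁ ps₂ : List Sequent} (r : RightIntro P ps₁ (Γ, P :: Δ))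
    (l : LeftIntro P ps₂ (Γ' ++ [P], Δ')) :
    ∃ n < P.degree, Derivable (ps₁ ++ ps₂) n (Γ ++ Γ', Δ ++ Δ') := by
  -- Case analysis cannot unify `Γ' ++ [P]` with the conclusion of a left rule.
  generalize hS : (Γ' ++ [P], Δ') = S at l
  cases r <;> cases l <;> obtain ⟨hΓ, rfl⟩ := Prod.mk.inj hS <;>
    obtain rfl := List.append_cancel_right hΓ
  case andR.andL1 =>
    exact ⟨_, Nat.lt_succ_self _, .cut (le_max_left _ _) (.hyp (by simp)) (.hyp (by simp))⟩
  case andR.andL2 =>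
    exact ⟨_, Nat.lt_succ_self _, .cut (le_max_right _ _) (.hyp (by simp)) (.hyp (by simp))⟩
  case orR1.orL =>
    exact ⟨_, Nat.lt_succ_self _, .cut (le_max_left _ _) (.hyp (by simp)) (.hyp (by simp))⟩
  case orR2.orL =>
    exact ⟨_, Nat.lt_succ_self _, .cut (le_max_right _ _) (.hyp (by simp)) (.hyp (by simp))⟩
  case impR.impL =>
    exact ⟨_, Nat.lt_succ_self _, .cut_imp (le_max_left _ _) (le_max_right _ _)
      (.hyp (by simp)) (.hyp (by simp)) (.hyp (by simp))⟩
  case negR.negL =>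
    exact ⟨_, Nat.lt_succ_self _, .cut_swap le_rfl (.hyp (by simp)) (.hyp (by simp))⟩

/-- Lemma 1 of the cut-elimination argument.
Let `Φ` be the derivation whose last inference is a cut on `P`, whose left
premise `Γ ⊢ P, Δ` is the conclusion of a right logical rule instance `r`
introducing `P` with premises `ps₁`, and whose right premise `Γ', P ⊢ Δ'` is
the conclusion of a left logical rule instance `l` introducing `P` with
premises `ps₂`.  Then there is a derivation `Ψ` of `Γ, Γ' ⊢ Δ, Δ'` whose open
premises form a subset of `ps₁ ++ ps₂` and with `δ(Ψ) < δ(Φ)`. -/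
theorem key_cut_lemma (P : Formula) (Γ Δ Γ' Δ' : List Formula)
    (ps₁ ps₂ : List Sequent)
    (r : RightIntro P ps₁ (Γ, P :: Δ))
    (l : LeftIntro P ps₂ (Γ' ++ [P], Δ')) :
    ∃ Ψ : Deriv (Γ ++ Γ', Δ ++ Δ'),
      Ψ.prems ⊆ ps₁ ++ ps₂ ∧
      Ψ.degree < (Deriv.cut Γ Δ Γ' Δ' P r.deriv l.deriv).degree := by
  obtain ⟨n, hn, Ψ, hprems, hdeg⟩ := exists_derivable_of_rightIntro_of_leftIntro r l
  exact ⟨Ψ, hprems, hdeg.trans_lt (hn.trans_le (le_max_left _ _))⟩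

end LKp
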